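/- There exists C > 0 such that for each sign σ ∈ {+1,−1} and all nonnegative square-summable sequences f, g, h : ℤ → [0,∞): Σ_{n₁, n₂ ∈ ℤ} ( ⟨n₁⟩^{1/2} / ( ⟨Φ_σ⟩^{1/2} ⟨n₂⟩^{1/2} ) ) f_{n₁−n₂} g_{n₁} h_{n₂} ≤ C ‖f‖_{ℓ²} ‖g‖_{ℓ²} ‖h‖_{ℓ²}. -/

import Mathlib

open scoped ENNReal NNReal

/-- `⟨x⟩ = (1+x²)^{1/2}`. -/
noncomputable def jbR (x : ℝ) : ℝ := Real.sqrt (1 + x ^ 2)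

/-- The Zakharov phase `Φ_σ = n₁² - n₂² + σ⟨n₀⟩` with `n₀ = n₁ - n₂`. -/
noncomputable def PhiZak (σ : ℝ) (n₁ n₂ : ℤ) : ℝ :=
  ((n₁ ^ 2 - n₂ ^ 2 : ℤ) : ℝ) + σ * jbR ((n₁ - n₂ : ℤ) : ℝ)

/-- The `ℓ²(ℤ)` norm (valued in `[0,∞]`). -/
noncomputable def l2Z (ω : ℤ → ℝ≥0) : ℝ≥0∞ :=
  (∑' n : ℤ, ((ω n : ℝ≥0∞)) ^ 2) ^ (1/2 : ℝ)

lemma jbR_ge_one (x : ℝ) : 1 ≤ jbR x := by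
  unfold jbR
  rw [Real.one_le_sqrt]; nlinarith [sq_nonneg x]

lemma jbR_ge_abs (x : ℝ) : |x| ≤ jbR x := by
  unfold jbR
  apply Real.le_sqrt_of_sq_le
  rw [sq_abs]; linarith

lemma jbR_le (x : ℝ) : jbR x ≤ 1 + |x| := by
  unfold jbR
  apply Real.sqrt_le_iff.mpr
  refine ⟨by positivity, ?_⟩
  nlinarith [sq_abs x, abs_nonneg x]

lemma jbR_sq (x : ℝ) : jbR x ^ 2 = 1 + x ^ 2 := by
  unfold jbR
  exact Real.sq_sqrt (by positivity)

/-- The summable majorant. -/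
noncomputable def zakQ (n : ℤ) : ℝ := 1 / (1 + (n : ℝ) ^ 2)

lemma zakQ_nonneg (n : ℤ) : 0 ≤ zakQ n := by unfold zakQ; positivity

/-- Abstract form of the pointwise bound. -/
lemma zak_core (a b : ℤ) (P : ℝ) (m : ℤ) (hm : m = a + b + 1 ∨ m = a + b - 1)
    (hP : |P - ((a - b : ℤ) : ℝ) * (m : ℝ)| ≤ 1) :
    jbR a / (jbR P * jbR b) ≤ 4 * (zakQ b + zakQ (a - b) + zakQ m) := by
  have hP1 := jbR_ge_one P
  have hb1 := jbR_ge_one b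
  have ha1 := jbR_ge_one a
  have q1 := zakQ_nonneg b
  have q2 := zakQ_nonneg (a - b)
  have q3 := zakQ_nonneg m
  rw [div_le_iff₀ (by positivity)]
  have hPb : jbR b ≤ jbR P * jbR b := le_mul_of_one_le_left (by linarith) hP1
  by_cases hd : a - b = 0
  · have hab : a = b := by omega
    have : zakQ (a - b) = 1 := by rw [hd]; simp [zakQ]
    subst hab
    nlinarith [mul_nonneg (add_nonneg q1 q3) (by linarith : 0 ≤ jbR P * jbR (a : ℝ))]
  by_cases hm0 : m = 0
  · have hz : zakQ m = 1 := by rw [hm0]; simp [zakQ]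
    have h1 : |(a : ℝ)| ≤ |(b : ℝ)| + 1 := by
      have : |a| ≤ |b| + 1 := by grind
      exact_mod_cast this
    have h2 := jbR_le a
    have h3 := jbR_ge_abs b
    have h4 : jbR a ≤ 4 * jbR b := by linarith
    nlinarith [mul_nonneg (add_nonneg q1 q2) (by linarith : 0 ≤ jbR P * jbR (b : ℝ))]
  · have hd1 : (1 : ℝ) ≤ |((a - b : ℤ) : ℝ)| := by
      exact_mod_cast Int.one_le_abs hd
    have hm1 : (1 : ℝ) ≤ |(m : ℝ)| := by
      exact_mod_cast Int.one_le_abs hm0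
    have h2a : 2 * |(a : ℝ)| ≤ |((a - b : ℤ) : ℝ)| + |(m : ℝ)| + 1 := by
      have : 2 * |a| ≤ |a - b| + |m| + 1 := by grind
      exact_mod_cast this
    have hja := jbR_le a
    have hjb := jbR_sq b
    have e1 : zakQ b = 1 / jbR b ^ 2 := by rw [hjb]; rfl
    have e2 : 1 / (2 * |((a - b : ℤ) : ℝ)| ^ 2) ≤ zakQ (a - b) := by
      unfold zakQ
      rw [← sq_abs ((a - b : ℤ) : ℝ)]
      apply one_div_le_one_div_of_le (by positivity)
      nlinarith
    have e3 : 1 / (2 * |(m : ℝ)| ^ 2) ≤ zakQ m := by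
      unfold zakQ
      rw [← sq_abs (m : ℝ)]
      apply one_div_le_one_div_of_le (by positivity)
      nlinarith
    have hPge : |((a - b : ℤ) : ℝ)| * |(m : ℝ)| ≤ 2 * jbR P := by
      rw [← abs_mul]
      have h5 := jbR_ge_abs P
      have h6 := abs_sub_abs_le_abs_sub (((a - b : ℤ) : ℝ) * (m : ℝ)) P
      rw [abs_sub_comm] at h6
      linarith
    generalize |((a - b : ℤ) : ℝ)| = D at *
    generalize |(m : ℝ)| = M at *
    generalize jbR (b : ℝ) = B at *
    have hS : 4 * (1 / B ^ 2 + 1 / (2 * D ^ 2) + 1 / (2 * M ^ 2)) ≤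
        4 * (zakQ b + zakQ (a - b) + zakQ m) := by rw [e1]; linarith
    have key : 2 * (D + M) ≤
        4 * (1 / B ^ 2 + 1 / (2 * D ^ 2) + 1 / (2 * M ^ 2)) * (D * M / 2 * B) := by
      have hx : (1 / B - 1 / D) ^ 2 + (1 / B - 1 / M) ^ 2 =
        2 * (1 / B ^ 2 + 1 / (2 * D ^ 2) + 1 / (2 * M ^ 2)) - 2 * (D + M) / (D * M * B) := by
        field_simp; ring
      have hy : 2 * (D + M) / (D * M * B) ≤
          2 * (1 / B ^ 2 + 1 / (2 * D ^ 2) + 1 / (2 * M ^ 2)) := by nlinarith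
      rw [div_le_iff₀ (by positivity)] at hy
      linarith
    calc jbR a ≤ 2 * (D + M) := by linarith
      _ ≤ _ := key
      _ ≤ 4 * (zakQ b + zakQ (a - b) + zakQ m) * (jbR P * B) := by
        apply mul_le_mul hS _ (by positivity) (by positivity)
        apply mul_le_mul_of_nonneg_right _ (by positivity)
        linarith

lemma zak_pointwise (σ : ℝ) (hσ : σ = 1 ∨ σ = -1) (a b : ℤ) :
    jbR a / (jbR (PhiZak σ a b) * jbR b) ≤
      4 * (zakQ b + zakQ (a - b) + zakQ (a + b + 1) + zakQ (a + b - 1)) := by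
  have q3 := zakQ_nonneg (a + b + 1)
  have q4 := zakQ_nonneg (a + b - 1)
  have u1 := jbR_le ((a - b : ℤ) : ℝ)
  have u2 := jbR_ge_abs ((a - b : ℤ) : ℝ)
  have hid : (((a ^ 2 - b ^ 2 : ℤ)) : ℝ) = ((a - b : ℤ) : ℝ) * ((a + b : ℤ) : ℝ) := by
    push_cast; ring
  have c1 : (|PhiZak σ a b - ((a - b : ℤ) : ℝ) * ((a + b + 1 : ℤ) : ℝ)| ≤ 1) ∨
      (|PhiZak σ a b - ((a - b : ℤ) : ℝ) * ((a + b - 1 : ℤ) : ℝ)| ≤ 1) := by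
    unfold PhiZak
    rw [hid]
    have e1 : ((a + b + 1 : ℤ) : ℝ) = ((a + b : ℤ) : ℝ) + 1 := by push_cast; ring
    have e2 : ((a + b - 1 : ℤ) : ℝ) = ((a + b : ℤ) : ℝ) - 1 := by push_cast; ring
    rw [e1, e2]
    generalize ((a + b : ℤ) : ℝ) = s at *
    generalize ((a - b : ℤ) : ℝ) = d at *
    generalize jbR d = j at *
    rcases abs_cases d with ⟨h, _⟩ | ⟨h, _⟩ <;> rw [h] at u1 u2 <;> rcases hσ with rfl | rfl
    · left; rw [abs_le]; constructor <;> nlinarith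
    · right; rw [abs_le]; constructor <;> nlinarith
    · right; rw [abs_le]; constructor <;> nlinarith
    · left; rw [abs_le]; constructor <;> nlinarith
  rcases c1 with h | h
  · have := zak_core a b _ (a + b + 1) (Or.inl rfl) h
    linarith
  · have := zak_core a b _ (a + b - 1) (Or.inr rfl) h
    linarith

/-- The total mass of the majorant. -/
noncomputable def zakA : ℝ≥0∞ := ∑' n : ℤ, ENNReal.ofReal (zakQ n)

lemma zakA_ne_top : zakA ≠ ⊤ := by
  have hs : Summable zakQ := by
    have h2 : Summable (fun n : ℤ => 1 / (n : ℝ) ^ 2) :=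
      Real.summable_one_div_int_pow.mpr (by norm_num)
    refine Summable.of_norm_bounded_eventually h2 ?_
    have : ({0}ᶜ : Set ℤ) ∈ Filter.cofinite := (Set.finite_singleton (0 : ℤ)).compl_mem_cofinite
    filter_upwards [this] with n hn
    have hn' : (n : ℝ) ≠ 0 := by exact_mod_cast hn
    rw [Real.norm_of_nonneg (zakQ_nonneg n)]
    unfold zakQ
    apply one_div_le_one_div_of_le (by positivity)
    linarith
  exact hs.tsum_ofReal_ne_top

/-- The weight. -/
noncomputable def zakW (σ : ℝ) (a b : ℤ) : ℝ :=
  jbR (a : ℝ) ^ (1/2 : ℝ) / (jbR (PhiZak σ a b) ^ (1/2 : ℝ) * jbR (b : ℝ) ^ (1/2 : ℝ))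

lemma zakW_sq (σ : ℝ) (a b : ℤ) :
    zakW σ a b ^ 2 = jbR a / (jbR (PhiZak σ a b) * jbR b) := by
  have hh : ∀ x : ℝ, (jbR x ^ (1/2 : ℝ)) ^ 2 = jbR x := by
    intro x
    rw [← Real.sqrt_eq_rpow]
    exact Real.sq_sqrt (by linarith [jbR_ge_one x])
  unfold zakW
  rw [div_pow, mul_pow, hh, hh, hh]

lemma zakW_nonneg (σ : ℝ) (a b : ℤ) : 0 ≤ zakW σ a b := by
  have hh : ∀ x : ℝ, 0 ≤ jbR x := fun x => by linarith [jbR_ge_one x]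
  unfold zakW
  have := Real.rpow_nonneg (hh a) (1/2)
  have := Real.rpow_nonneg (hh b) (1/2)
  have := Real.rpow_nonneg (hh (PhiZak σ a b)) (1/2)
  positivity

lemma zak_sum (σ : ℝ) (hσ : σ = 1 ∨ σ = -1) (a : ℤ) :
    ∑' b : ℤ, ENNReal.ofReal (zakW σ a b) ^ 2 ≤ 16 * zakA := by
  have s1 : ∑' b : ℤ, ENNReal.ofReal (zakQ (a - b)) = zakA :=
    (Equiv.subLeft a).tsum_eq (fun n => ENNReal.ofReal (zakQ n))
  have s2 : ∑' b : ℤ, ENNReal.ofReal (zakQ (a + b + 1)) = zakA := by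
    rw [zakA, ← (Equiv.addLeft (a + 1)).tsum_eq (fun n => ENNReal.ofReal (zakQ n))]
    refine tsum_congr fun b => ?_
    simp only [Equiv.coe_addLeft]
    congr 2; ring
  have s3 : ∑' b : ℤ, ENNReal.ofReal (zakQ (a + b - 1)) = zakA := by
    rw [zakA, ← (Equiv.addLeft (a - 1)).tsum_eq (fun n => ENNReal.ofReal (zakQ n))]
    refine tsum_congr fun b => ?_
    simp only [Equiv.coe_addLeft]
    congr 2; ring
  calc ∑' b : ℤ, ENNReal.ofReal (zakW σ a b) ^ 2
      ≤ ∑' b : ℤ, 4 * (ENNReal.ofReal (zakQ b) + ENNReal.ofReal (zakQ (a - b))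
          + ENNReal.ofReal (zakQ (a + b + 1)) + ENNReal.ofReal (zakQ (a + b - 1))) := by
        refine ENNReal.tsum_le_tsum fun b => ?_
        have q1 := zakQ_nonneg b
        have q2 := zakQ_nonneg (a - b)
        have q3 := zakQ_nonneg (a + b + 1)
        have q4 := zakQ_nonneg (a + b - 1)
        rw [← ENNReal.ofReal_pow (zakW_nonneg σ a b), zakW_sq,
          ← ENNReal.ofReal_add q1 q2, ← ENNReal.ofReal_add (by linarith) q3,
          ← ENNReal.ofReal_add (by linarith) q4,
          ← ENNReal.ofReal_ofNat 4, ← ENNReal.ofReal_mul (by norm_num)]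
        exact ENNReal.ofReal_le_ofReal (zak_pointwise σ hσ a b)
    _ = 16 * zakA := by
        rw [ENNReal.tsum_mul_left, ENNReal.tsum_add, ENNReal.tsum_add, ENNReal.tsum_add,
          s1, s2, s3, ← zakA]
        ring

lemma zak_cs {ι : Type*} (u v : ι → ℝ≥0∞) :
    ∑' i, u i * v i ≤ (∑' i, u i ^ 2) ^ (1/2 : ℝ) * (∑' i, v i ^ 2) ^ (1/2 : ℝ) := by
  let _ : MeasurableSpace ι := ⊤
  have h := ENNReal.lintegral_mul_le_Lp_mul_Lq (MeasureTheory.Measure.count (α := ι))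
    Real.HolderConjugate.two_two (f := u) (g := v) (measurable_from_top.aemeasurable)
    (measurable_from_top.aemeasurable)
  simp only [Pi.mul_apply] at h
  have hc : ∀ w : ι → ℝ≥0∞, ∫⁻ i, w i ∂MeasureTheory.Measure.count = ∑' i, w i := by
    intro w
    exact MeasureTheory.lintegral_count' measurable_from_top
  rw [hc, hc, hc] at h
  simpa using h

/-- The Zakharov trilinear weight estimate with weight
`⟨n₁⟩^{1/2} / (⟨Φ_σ⟩^{1/2} ⟨n₂⟩^{1/2})`. -/
theorem Zakharov_W1 :
    ∃ C : ℝ, 0 < C ∧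
      ∀ σ : ℝ, (σ = 1 ∨ σ = -1) →
        ∀ f g h : ℤ → ℝ≥0,
          Summable (fun n => f n ^ 2) → Summable (fun n => g n ^ 2) →
          Summable (fun n => h n ^ 2) →
          (∑' p : ℤ × ℤ,
              ENNReal.ofReal (jbR (p.1 : ℝ) ^ (1/2 : ℝ) /
                  (jbR (PhiZak σ p.1 p.2) ^ (1/2 : ℝ) * jbR (p.2 : ℝ) ^ (1/2 : ℝ))) *
                (f (p.1 - p.2) : ℝ≥0∞) * (g p.1 : ℝ≥0∞) * (h p.2 : ℝ≥0∞))
            ≤ ENNReal.ofReal C * (l2Z f * l2Z g * l2Z h) := by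
  have hfin : (16 * zakA) ^ (1/2 : ℝ) ≠ ⊤ :=
    ENNReal.rpow_ne_top_of_nonneg (by norm_num) (ENNReal.mul_ne_top (by norm_num) zakA_ne_top)
  refine ⟨((16 * zakA) ^ (1/2 : ℝ)).toReal + 1, by positivity, ?_⟩
  intro σ hσ f g h _ _ _
  have hC : (16 * zakA) ^ (1/2 : ℝ) ≤
      ENNReal.ofReal (((16 * zakA) ^ (1/2 : ℝ)).toReal + 1) := by
    rw [ENNReal.le_ofReal_iff_toReal_le hfin (by positivity)]
    linarith
  have hu : ∑' p : ℤ × ℤ, (ENNReal.ofReal (zakW σ p.1 p.2) * (g p.1 : ℝ≥0∞)) ^ 2 ≤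
      16 * zakA * ∑' n : ℤ, ((g n : ℝ≥0∞)) ^ 2 := by
    rw [ENNReal.tsum_prod', ← ENNReal.tsum_mul_left]
    refine ENNReal.tsum_le_tsum fun a => ?_
    simp only [mul_pow]
    rw [ENNReal.tsum_mul_right]
    gcongr
    exact zak_sum σ hσ a
  have hv : ∑' p : ℤ × ℤ, ((f (p.1 - p.2) : ℝ≥0∞) * (h p.2 : ℝ≥0∞)) ^ 2 =
      (∑' n : ℤ, ((f n : ℝ≥0∞)) ^ 2) * ∑' n : ℤ, ((h n : ℝ≥0∞)) ^ 2 := by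
    rw [ENNReal.tsum_prod', ENNReal.tsum_comm, ← ENNReal.tsum_mul_left]
    refine tsum_congr fun b => ?_
    simp only [mul_pow]
    rw [ENNReal.tsum_mul_right]
    congr 1
    exact (Equiv.subRight b).tsum_eq (fun n => ((f n : ℝ≥0∞)) ^ 2)
  calc _ = ∑' p : ℤ × ℤ, (ENNReal.ofReal (zakW σ p.1 p.2) * (g p.1 : ℝ≥0∞)) *
        ((f (p.1 - p.2) : ℝ≥0∞) * (h p.2 : ℝ≥0∞)) := by
        refine tsum_congr fun p => ?_
        unfold zakW
        ring
    _ ≤ _ := zak_cs _ _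
    _ ≤ (16 * zakA * ∑' n : ℤ, ((g n : ℝ≥0∞)) ^ 2) ^ (1/2 : ℝ) *
        ((∑' n : ℤ, ((f n : ℝ≥0∞)) ^ 2) * ∑' n : ℤ, ((h n : ℝ≥0∞)) ^ 2) ^ (1/2 : ℝ) := by
        rw [hv]
        gcongr
    _ = (16 * zakA) ^ (1/2 : ℝ) * (l2Z f * l2Z g * l2Z h) := by
        rw [ENNReal.mul_rpow_of_nonneg (16 * zakA) _ (by norm_num),
          ENNReal.mul_rpow_of_nonneg (∑' n : ℤ, ((f n : ℝ≥0∞)) ^ 2) _ (by norm_num)]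
        unfold l2Z
        ring
    _ ≤ _ := by gcongr
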